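/- For every integer n ≥ 0 and every z ∈ ℂ with z ≠ 0 and z^{2N} ≠ 1, the CMV Laurent polynomials ψ_n(z;N) associated to the sieved Jacobi OPUC satisfy the eigenvalue equation z·(d/dz)ψ_n(z;N) + Σ_{k=0}^{N−1} A_k(z;N)·(ψ_n(q^k/z;N) − ψ_n(z;N)) = λ_n(N)·ψ_n(z;N), where λ_n(N) = −n/2 if n is even and λ_n(N) = (n+1)/2 + (α+β+1)N if n is odd. -/

import Mathlib

open Finset

/-- Monic OPUC associated to a sequence of (real) Verblunsky parameters. -/
noncomputable def Phi (c : ℕ → ℝ) : ℕ → ℂ → ℂ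
  | 0, _ => 1
  | n + 1, z => z * Phi c n z - (c n : ℂ) * z ^ n * Phi c n z⁻¹

/-- CMV Laurent polynomials: ψ_{2m} z = z^m Φ_{2m}(1/z), ψ_{2m+1} z = z^{-m} Φ_{2m+1}(z). -/
noncomputable def psi (c : ℕ → ℝ) (n : ℕ) (z : ℂ) : ℂ :=
  if Even n then z ^ (n / 2) * Phi c n z⁻¹
  else z ^ (-((n / 2 : ℕ) : ℤ)) * Phi c n z

/-- Verblunsky parameters of the Jacobi OPUC. -/
noncomputable def jacobiA (α β : ℝ) (n : ℕ) : ℝ :=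
  -(α + 1 / 2 + (-1 : ℝ) ^ (n + 1) * (β + 1 / 2)) / (n + α + β + 2)

/-- Sieved Verblunsky parameters: a_n(N) = a_{k-1} if n = N k - 1 (k ≥ 1), 0 otherwise. -/
noncomputable def sievedA (α β : ℝ) (N n : ℕ) : ℝ :=
  if N ∣ (n + 1) then jacobiA α β ((n + 1) / N - 1) else 0

/-- The primitive N-th root of unity q = exp(2πi/N). -/
noncomputable def qN (N : ℕ) : ℂ := Complex.exp (2 * Real.pi * Complex.I / N)

/-- The coefficients A_k(z;N) of the Dunkl-type operator L(N). -/
noncomputable def Acoef (α β : ℝ) (N k : ℕ) (z : ℂ) : ℂ :=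
  if Even N then
    ((α : ℂ) + β + 1 + (-1 : ℂ) ^ k * ((α : ℂ) - β)) * z ^ 2 / (qN N ^ k - z ^ 2)
  else
    (((α : ℂ) + β + 1) * z ^ 2 +
        (if Even k then qN N ^ ((k : ℤ) / 2) else qN N ^ (((k : ℤ) - (N : ℤ)) / 2)) *
          ((α : ℂ) - β) * z) /
      (qN N ^ k - z ^ 2)

/-- B(z) = N((α+β+1) z^{2N} + (α-β) z^N)/(z^{2N} - 1). -/
noncomputable def Bfun (α β : ℝ) (N : ℕ) (z : ℂ) : ℂ :=
  (N : ℂ) * (((α : ℂ) + β + 1) * z ^ (2 * N) + ((α : ℂ) - β) * z ^ N) / (z ^ (2 * N) - 1)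

/-- The Dunkl-type operator L(N). -/
noncomputable def Lop (α β : ℝ) (N : ℕ) (f : ℂ → ℂ) : ℂ → ℂ := fun z =>
  z * deriv f z + ∑ k ∈ Finset.range N, Acoef α β N k z * (f (qN N ^ k / z) - f z)

/-- A function ℂ∖{0} → ℂ is a Laurent polynomial. -/
def IsLaurentPoly (f : ℂ → ℂ) : Prop :=
  ∃ (m : ℕ) (p : Polynomial ℂ), ∀ z : ℂ, z ≠ 0 → f z = Polynomial.eval z p / z ^ m

/-- Sieved Jacobi polynomial of the first kind, as a function of z (x = z + 1/z). -/
noncomputable def sievP (α β : ℝ) (N n : ℕ) (z : ℂ) : ℂ :=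
  psi (sievedA α β N) (2 * n) z
    + (1 + (sievedA α β N (2 * n - 1) : ℂ)) * psi (sievedA α β N) (2 * n - 1) z

/-- χ_n(z) = (z - 1/z) Q_{n-1}(x(z)), with Q the sieved Jacobi polynomial of 2nd kind. -/
noncomputable def sievChi (α β : ℝ) (N n : ℕ) (z : ℂ) : ℂ :=
  -psi (sievedA α β N) (2 * n) z
    + (1 - (sievedA α β N (2 * n - 1) : ℂ)) * psi (sievedA α β N) (2 * n - 1) z

/-!
Put `w = z ^ N`. The sieved `Φ_{Nk+j}` is `z ^ j * Φ_k(w)` for `j < N`, so every sieved `ψ_n` has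
the form `z ^ a * G(w)`, where `G` is `Φ_k` or its reverse `Φ_k^*`. The numbers `q ^ k` are the
`N`-th roots of unity, and orthogonality of characters sums the coefficients `A_k` in closed form,
so that the operator `L(N)` acts on `z ^ a * G(w)` as `z ^ a * (a + N * D_r) G(w)`. Here `D_r` is
a first-order operator with the single reflection `w ↦ 1 / w` that no longer involves `N`, and the
index `r` is determined by `-N * r < 2 * a ≤ N * (1 - r)`. The differential relations of the
Jacobi OPUC then say exactly that `D_k Φ_k = (k + α + β + 1) Φ_k` and `D_{k+1} Φ_k^* = 0`.
-/

section OPUC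

variable (c : ℕ → ℝ) (n : ℕ) {z : ℂ}

/-- The reversed polynomial `Φ_n^*(z) = z ^ n Φ_n(1 / z)`, for real Verblunsky parameters. Unlike a
polynomial it carries a junk value at `z = 0`. -/
noncomputable def PhiStar (z : ℂ) : ℂ := z ^ n * Phi c n z⁻¹

lemma Phi_succ (z : ℂ) : Phi c (n + 1) z = z * Phi c n z - c n * PhiStar c n z := by
  rw [Phi, PhiStar, mul_assoc]

lemma PhiStar_succ (hz : z ≠ 0) :
    PhiStar c (n + 1) z = PhiStar c n z - c n * (z * Phi c n z) := by
  simp only [PhiStar, Phi, inv_inv, inv_pow]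
  field_simp
  ring

lemma pow_mul_PhiStar_inv (hz : z ≠ 0) : z ^ n * PhiStar c n z⁻¹ = Phi c n z := by
  rw [PhiStar, inv_inv, inv_pow, mul_inv_cancel_left₀ (pow_ne_zero n hz)]

lemma differentiableAt_Phi (hz : z ≠ 0) : DifferentiableAt ℂ (Phi c n) z := by
  induction n generalizing z with
  | zero => exact differentiableAt_const 1
  | succ n ih =>
    have hinv : DifferentiableAt ℂ (fun y => Phi c n y⁻¹) z :=
      (ih (inv_ne_zero hz)).fun_comp' z (differentiableAt_inv hz)
    exact (differentiableAt_id.mul (ih hz)).sub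
      (((differentiableAt_const _).mul (differentiableAt_id.pow n)).mul hinv)

lemma differentiableAt_PhiStar (hz : z ≠ 0) : DifferentiableAt ℂ (PhiStar c n) z :=
  (differentiableAt_id.pow n).mul
    ((differentiableAt_Phi c n (inv_ne_zero hz)).fun_comp' z (differentiableAt_inv hz))

lemma deriv_Phi_succ (hz : z ≠ 0) :
    deriv (Phi c (n + 1)) z =
      Phi c n z + z * deriv (Phi c n) z - c n * deriv (PhiStar c n) z := by
  have hder := ((hasDerivAt_id z).mul (differentiableAt_Phi c n hz).hasDerivAt).sub
    ((differentiableAt_PhiStar c n hz).hasDerivAt.const_mul (c n : ℂ))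
  have hsucc : Phi c (n + 1) = id * Phi c n - fun y => (c n : ℂ) * PhiStar c n y :=
    funext (Phi_succ c n)
  rw [hsucc, hder.deriv, one_mul, id]

lemma deriv_PhiStar_succ (hz : z ≠ 0) :
    deriv (PhiStar c (n + 1)) z =
      deriv (PhiStar c n) z - c n * (Phi c n z + z * deriv (Phi c n) z) := by
  have hder := (differentiableAt_PhiStar c n hz).hasDerivAt.sub
    (((hasDerivAt_id z).mul (differentiableAt_Phi c n hz).hasDerivAt).const_mul (c n : ℂ))
  have hsucc : PhiStar c (n + 1) =ᶠ[nhds z]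
      PhiStar c n - fun y => (c n : ℂ) * (id * Phi c n : ℂ → ℂ) y := by
    filter_upwards [isOpen_ne.mem_nhds hz] with y hy using PhiStar_succ c n hy
  rw [hsucc.deriv_eq, hder.deriv, one_mul, id]

lemma psi_two_mul (m : ℕ) (hz : z ≠ 0) :
    psi c (2 * m) z = z ^ (-(m : ℤ)) * PhiStar c (2 * m) z := by
  rw [psi, if_pos (even_two_mul m), Nat.mul_div_cancel_left m two_pos, PhiStar, zpow_neg,
    zpow_natCast, two_mul m, pow_add]
  field_simp

lemma psi_two_mul_add_one (m : ℕ) (z : ℂ) :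
    psi c (2 * m + 1) z = z ^ (-(m : ℤ)) * Phi c (2 * m + 1) z := by
  rw [psi, if_neg (by simp), show (2 * m + 1) / 2 = m by lia]

lemma Phi_add_of_forall_eq_zero {m j : ℕ} (hc : ∀ i < j, c (m + i) = 0) (z : ℂ) :
    Phi c (m + j) z = z ^ j * Phi c m z := by
  induction j with
  | zero => simp
  | succ j ih =>
    rw [← add_assoc, Phi_succ, hc j j.lt_succ_self, ih fun i hi => hc i (by lia)]
    push_cast
    ring

end OPUC

section Sieve

variable {N : ℕ} (c : ℕ → ℝ) (k : ℕ) {j : ℕ} {z : ℂ}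

/-- The sieved sequence: `c (k - 1)` at index `N * k - 1` for `k ≥ 1`, and `0` elsewhere. The
sequence `sievedA` is the case of the Jacobi parameters. -/
noncomputable def sieve (N : ℕ) (c : ℕ → ℝ) (n : ℕ) : ℝ :=
  if N ∣ n + 1 then c ((n + 1) / N - 1) else 0

lemma sievedA_eq_sieve (α β : ℝ) (N : ℕ) : sievedA α β N = sieve N (jacobiA α β) := rfl

lemma sieve_mul_add_of_lt (hj : j + 1 < N) : sieve N c (N * k + j) = 0 := by
  rw [sieve, if_neg]
  rw [add_assoc, Nat.dvd_add_right (dvd_mul_right N k)]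
  exact Nat.not_dvd_of_pos_of_lt j.succ_pos hj

lemma sieve_mul_add_pred (hN : 0 < N) : sieve N c (N * k + (N - 1)) = c k := by
  have hsucc : N * k + (N - 1) + 1 = N * (k + 1) := by rw [mul_add]; lia
  rw [sieve, hsucc, if_pos (dvd_mul_right N _), Nat.mul_div_cancel_left _ hN, Nat.add_sub_cancel]

lemma Phi_sieve_mul_add_eq_Phi_sieve_mul (hj : j < N) (z : ℂ) :
    Phi (sieve N c) (N * k + j) z = z ^ j * Phi (sieve N c) (N * k) z :=
  Phi_add_of_forall_eq_zero _ (fun _ hi => sieve_mul_add_of_lt c k (by lia)) z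

lemma Phi_sieve_mul (hN : 0 < N) (hz : z ≠ 0) :
    Phi (sieve N c) (N * k) z = Phi c k (z ^ N) := by
  induction k generalizing z with
  | zero => rfl
  | succ k ih =>
    have hsucc : N * (k + 1) = N * k + (N - 1) + 1 := by rw [mul_add]; lia
    have hpred : N - 1 < N := Nat.sub_one_lt hN.ne'
    rw [hsucc, Phi, Phi_sieve_mul_add_eq_Phi_sieve_mul c k hpred,
      Phi_sieve_mul_add_eq_Phi_sieve_mul c k hpred, ih hz, ih (inv_ne_zero hz),
      sieve_mul_add_pred c k hN, Phi, inv_pow, inv_pow, ← mul_assoc, mul_pow_sub_one hN.ne',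
      pow_add, pow_mul]
    field_simp

lemma Phi_sieve_mul_add (hj : j < N) (hz : z ≠ 0) :
    Phi (sieve N c) (N * k + j) z = z ^ j * Phi c k (z ^ N) := by
  rw [Phi_sieve_mul_add_eq_Phi_sieve_mul c k hj, Phi_sieve_mul c k (by lia) hz]

lemma PhiStar_sieve_mul_add (hj : j < N) (hz : z ≠ 0) :
    PhiStar (sieve N c) (N * k + j) z = PhiStar c k (z ^ N) := by
  rw [PhiStar, PhiStar, Phi_sieve_mul_add c k hj (inv_ne_zero hz), inv_pow, inv_pow, pow_add,
    pow_mul]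
  field_simp

lemma psi_sieve_two_mul {m : ℕ} (hm : 2 * m = N * k + j) (hj : j < N) (hz : z ≠ 0) :
    psi (sieve N c) (2 * m) z = z ^ (-(m : ℤ)) * PhiStar c k (z ^ N) := by
  rw [psi_two_mul _ _ hz, hm, PhiStar_sieve_mul_add c k hj hz]

lemma psi_sieve_two_mul_add_one {m : ℕ} (hm : 2 * m + 1 = N * k + j) (hj : j < N) (hz : z ≠ 0) :
    psi (sieve N c) (2 * m + 1) z = z ^ (j - m : ℤ) * Phi c k (z ^ N) := by
  rw [psi_two_mul_add_one, hm, Phi_sieve_mul_add c k hj hz, ← mul_assoc, ← zpow_natCast z j,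
    ← zpow_add₀ hz, neg_add_eq_sub]

end Sieve

section RootsOfUnity

variable {K : Type*} [Field K] {q x : K} {N : ℕ}

lemma sum_zpow_of_isPrimitiveRoot (hq : IsPrimitiveRoot q N) (e : ℤ) :
    ∑ i ∈ range N, (q ^ i) ^ e = if (N : ℤ) ∣ e then (N : K) else 0 := by
  have hswap : ∀ i : ℕ, (q ^ i) ^ e = (q ^ e) ^ i := fun i => by
    rw [← zpow_natCast, ← zpow_natCast, zpow_comm]
  simp only [hswap]
  split_ifs with hdvd
  · simp [(hq.zpow_eq_one_iff_dvd e).mpr hdvd]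
  · have hne : q ^ e ≠ 1 := mt (hq.zpow_eq_one_iff_dvd e).mp hdvd
    rw [geom_sum_eq hne, ← hswap, hq.pow_eq_one, one_zpow, sub_self, zero_div]

lemma div_sub_eq_sum_of_pow_eq_one {ζ : K} (hζ : ζ ^ N = 1) (hζ0 : ζ ≠ 0) (hx : x ^ N ≠ 1) (e : ℤ) :
    ζ ^ e / (ζ - x) = (∑ l ∈ range N, x ^ l * ζ ^ (e - 1 - l)) / (1 - x ^ N) := by
  have hζx : ζ - x ≠ 0 := fun h => hx (by rw [← sub_eq_zero.mp h, hζ])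
  have hgeom : (∑ l ∈ range N, (x / ζ) ^ l) * (1 - x / ζ) = 1 - x ^ N := by
    rw [geom_sum_mul_neg, div_pow, hζ, div_one]
  have hterm : ∀ l ∈ range N, x ^ l * ζ ^ (e - 1 - l) = ζ ^ e / ζ * (x / ζ) ^ l := fun l _ => by
    rw [zpow_sub₀ hζ0, zpow_sub_one₀ hζ0, zpow_natCast, div_pow]
    ring
  rw [div_eq_div_iff hζx (sub_ne_zero.mpr hx.symm), sum_congr rfl hterm, ← mul_sum, ← hgeom]
  field_simp

lemma sum_zpow_div_sub_of_isPrimitiveRoot (hq : IsPrimitiveRoot q N) (hx : x ^ N ≠ 1) {e t : ℤ}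
    (hlt : N * t < e) (hle : e ≤ N * (t + 1)) :
    ∑ i ∈ range N, (q ^ i) ^ e / (q ^ i - x) = N * x ^ (e - 1 - N * t) / (1 - x ^ N) := by
  have hN : N ≠ 0 := by rintro rfl; simp at hx
  have hroot (i : ℕ) : (q ^ i) ^ N = 1 := by rw [pow_right_comm, hq.pow_eq_one, one_pow]
  obtain ⟨l₀, hl₀⟩ : ∃ l₀ : ℕ, e - 1 - N * t = l₀ := Int.eq_ofNat_of_zero_le (by lia)
  have hl₀N : l₀ < N := by rw [mul_add] at hle; lia
  have hdvd : ∀ l ∈ range N, (N : ℤ) ∣ e - 1 - l ↔ l₀ = l := by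
    intro l hl
    rw [show e - 1 - l = (l₀ - l : ℤ) + N * t by lia, Int.dvd_add_left (dvd_mul_right _ t)]
    refine ⟨fun h => ?_, fun h => by simp [h]⟩
    have := Int.eq_zero_of_abs_lt_dvd h (by rw [mem_range] at hl; rw [abs_lt]; lia)
    lia
  simp only [div_sub_eq_sum_of_pow_eq_one (hroot _) (pow_ne_zero _ (hq.ne_zero hN)) hx e]
  rw [← sum_div, sum_comm, hl₀, zpow_natCast]
  simp only [← mul_sum, sum_zpow_of_isPrimitiveRoot hq]
  rw [sum_congr rfl fun l hl => by rw [if_congr (hdvd l hl) rfl rfl]]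
  simp [hl₀N, mul_comm]

end RootsOfUnity

section Coefficients

variable (α β : ℝ) {N : ℕ} {z : ℂ}

lemma isPrimitiveRoot_qN (hN : N ≠ 0) : IsPrimitiveRoot (qN N) N :=
  Complex.isPrimitiveRoot_exp N hN

lemma neg_one_pow_eq_qN_pow (hN : N ≠ 0) (heven : Even N) (k : ℕ) :
    (-1 : ℂ) ^ k = (qN N ^ k) ^ ((N + 1) / 2) := by
  have hhalf : N = (N + 1) / 2 * 2 := by obtain ⟨M, rfl⟩ := heven; lia
  have hprim := (isPrimitiveRoot_qN hN).pow hN.bot_lt hhalf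
  rw [pow_right_comm, hprim.eq_neg_one_of_two_right]

lemma ite_qN_zpow_eq_qN_pow (hodd : ¬ Even N) (k : ℕ) :
    (if Even k then qN N ^ ((k : ℤ) / 2) else qN N ^ (((k : ℤ) - (N : ℤ)) / 2)) =
      (qN N ^ k) ^ ((N + 1) / 2) := by
  obtain ⟨M, rfl⟩ := Nat.not_even_iff_odd.mp hodd
  have hq := isPrimitiveRoot_qN (Nat.succ_ne_zero (2 * M))
  have hperiod (s t : ℤ) : qN (2 * M + 1) ^ (s + (2 * M + 1 : ℕ) * t) = qN (2 * M + 1) ^ s := by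
    rw [zpow_add₀ (hq.ne_zero (Nat.succ_ne_zero _)), zpow_mul, zpow_natCast, hq.pow_eq_one,
      one_zpow, mul_one]
  rw [← pow_mul, ← zpow_natCast, show (2 * M + 1 + 1) / 2 = M + 1 by lia]
  split_ifs with hk
  · obtain ⟨t, rfl⟩ := hk
    rw [← hperiod _ t]
    congr 1
    rw [show ((t + t : ℕ) : ℤ) / 2 = t by lia]
    push_cast
    ring
  · obtain ⟨t, rfl⟩ := Nat.not_even_iff_odd.mp hk
    rw [← hperiod _ (t + 1)]
    congr 1
    rw [show (((2 * t + 1 : ℕ) : ℤ) - (2 * M + 1 : ℕ)) / 2 = t - M by lia]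
    push_cast
    ring

-- For odd `N` the exponent `(N + 1) / 2` inverts `2` modulo `N`, so the power of `q ^ k` is its
-- square root `ρ_k`; for even `N` the exponent is `N / 2` and the power is `(-1) ^ k`.
lemma Acoef_eq (hN : N ≠ 0) (k : ℕ) (z : ℂ) :
    Acoef α β N k z =
      (((α : ℂ) + β + 1) * z ^ 2 +
        ((α : ℂ) - β) * z ^ (2 - N % 2) * (qN N ^ k) ^ ((N + 1) / 2)) / (qN N ^ k - z ^ 2) := by
  by_cases heven : Even N
  · rw [Acoef, if_pos heven, neg_one_pow_eq_qN_pow hN heven, Nat.even_iff.mp heven]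
    ring
  · rw [Acoef, if_neg heven, ite_qN_zpow_eq_qN_pow heven,
      Nat.odd_iff.mp (Nat.not_even_iff_odd.mp heven)]
    ring

lemma sum_Acoef_mul_zpow (hz : z ≠ 0) (hz2 : z ^ (2 * N) ≠ 1) {e s t : ℤ}
    (hs : N * (2 * s) < 2 * e) (hs' : 2 * e ≤ N * (2 * s + 2))
    (ht : N * (2 * t - 1) < 2 * e) (ht' : 2 * e ≤ N * (2 * t + 1)) :
    ∑ i ∈ range N, Acoef α β N i z * (qN N ^ i) ^ e =
      N * (z ^ e) ^ 2 * (((α : ℂ) + β + 1) * (z ^ N) ^ (-2 * s) +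
        ((α : ℂ) - β) * (z ^ N) ^ (1 - 2 * t)) / (1 - z ^ (2 * N)) := by
  have hN : N ≠ 0 := by rintro rfl; simp at hz2
  have hq := isPrimitiveRoot_qN hN
  have hx : (z ^ 2) ^ N ≠ 1 := by rwa [← pow_mul]
  set M := (N + 1) / 2
  have hsplit : ∀ i ∈ range N, Acoef α β N i z * (qN N ^ i) ^ e =
      ((α : ℂ) + β + 1) * z ^ 2 * ((qN N ^ i) ^ e / (qN N ^ i - z ^ 2)) +
      ((α : ℂ) - β) * z ^ (2 - N % 2) * ((qN N ^ i) ^ (e + M) / (qN N ^ i - z ^ 2)) := by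
    intro i _
    rw [Acoef_eq α β hN, zpow_add₀ (pow_ne_zero i (hq.ne_zero hN)), zpow_natCast]
    ring
  have hpow_s : z ^ 2 * (z ^ 2) ^ (e - 1 - N * s) = (z ^ e) ^ 2 * (z ^ N) ^ (-2 * s) := by
    simp only [← zpow_natCast, ← zpow_mul, ← zpow_add₀ hz]
    congr 1
    push_cast
    ring
  have hpow_t : z ^ (2 - N % 2) * (z ^ 2) ^ (e + M - 1 - N * t) =
      (z ^ e) ^ 2 * (z ^ N) ^ (1 - 2 * t) := by
    simp only [← zpow_natCast, ← zpow_mul, ← zpow_add₀ hz]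
    congr 1
    rw [show ((2 - N % 2 : ℕ) : ℤ) = 2 + N - 2 * M by lia]
    push_cast
    ring
  rw [sum_congr rfl hsplit, sum_add_distrib, ← mul_sum, ← mul_sum,
    sum_zpow_div_sub_of_isPrimitiveRoot hq hx (t := s) (by linarith) (by linarith),
    sum_zpow_div_sub_of_isPrimitiveRoot hq hx (t := t) (by lia) (by lia), ← pow_mul z 2 N]
  linear_combination (N : ℂ) / (1 - z ^ (2 * N)) *
    (((α : ℂ) + β + 1) * hpow_s + ((α : ℂ) - β) * hpow_t)

end Coefficients

section ReducedOperator

variable (α β : ℝ)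

/-- The numerators of the reflection terms: `(α + β + 1) + (α - β) w` for even `r`, and
`(α + β + 1) w + (α - β)` for odd `r`. -/
noncomputable def jacobiWeight (r : ℤ) (w : ℂ) : ℂ :=
  if Even r then ((α : ℂ) + β + 1) + ((α : ℂ) - β) * w else ((α : ℂ) + β + 1) * w + ((α : ℂ) - β)

/-- The operator `D_r` induced by `L(N)` in the variable `w = z ^ N`; `D_1` is `L(1)`. -/
noncomputable def reducedOp (r : ℤ) (G : ℂ → ℂ) (w : ℂ) : ℂ :=
  w * deriv G w +
    (w ^ r * jacobiWeight α β r w * G w⁻¹ - w * jacobiWeight α β 1 w * G w) / (1 - w ^ 2)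

lemma jacobiWeight_add_two (r : ℤ) (w : ℂ) : jacobiWeight α β (r + 2) w = jacobiWeight α β r w := by
  simp [jacobiWeight]

lemma mul_jacobiWeight_one_sub (w : ℂ) :
    w * jacobiWeight α β 1 w - jacobiWeight α β 0 w = ((α : ℂ) + β + 1) * (w ^ 2 - 1) := by
  rw [jacobiWeight, jacobiWeight, if_neg Int.not_even_one, if_pos Even.zero]
  ring

variable {N : ℕ} {z : ℂ}

lemma sum_Acoef_mul_zpow_eq_jacobiWeight (hz : z ≠ 0) (hz2 : z ^ (2 * N) ≠ 1) {e r : ℤ}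
    (hlt : -(N * r) < 2 * e) (hle : 2 * e ≤ N * (1 - r)) :
    ∑ i ∈ range N, Acoef α β N i z * (qN N ^ i) ^ e =
      N * (z ^ e) ^ 2 * ((z ^ N) ^ r * jacobiWeight α β r (z ^ N)) / (1 - z ^ (2 * N)) := by
  have hw : z ^ N ≠ 0 := pow_ne_zero N hz
  rw [jacobiWeight]
  split_ifs with hr
  · obtain ⟨t, rfl⟩ := hr
    rw [sum_Acoef_mul_zpow α β hz hz2 (s := -t) (t := -t) (by linarith) (by linarith)
      (by linarith) (by linarith), show -2 * -t = t + t by ring,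
      show 1 - 2 * -t = t + t + 1 by ring, zpow_add_one₀ hw]
    ring
  · obtain ⟨t, rfl⟩ := Int.not_even_iff_odd.mp hr
    rw [sum_Acoef_mul_zpow α β hz hz2 (s := -t - 1) (t := -t) (by linarith) (by linarith)
      (by linarith) (by linarith), show -2 * (-t - 1) = 2 * t + 1 + 1 by ring,
      show 1 - 2 * -t = 2 * t + 1 by ring, zpow_add_one₀ hw]
    ring

lemma sum_Acoef (hz : z ≠ 0) (hz2 : z ^ (2 * N) ≠ 1) :
    ∑ i ∈ range N, Acoef α β N i z =
      N * (z ^ N * jacobiWeight α β 1 (z ^ N)) / (1 - z ^ (2 * N)) := by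
  have hN : N ≠ 0 := by rintro rfl; simp at hz2
  simpa using sum_Acoef_mul_zpow_eq_jacobiWeight α β hz hz2 (e := 0) (r := 1) (by lia) (by simp)

lemma mul_deriv_zpow_mul_comp_pow (a : ℤ) (hN : N ≠ 0) (hz : z ≠ 0) {G : ℂ → ℂ}
    (hG : DifferentiableAt ℂ G (z ^ N)) :
    z * deriv (fun y => y ^ a * G (y ^ N)) z =
      z ^ a * (a * G (z ^ N) + N * (z ^ N * deriv G (z ^ N))) := by
  have hder : HasDerivAt (fun y => y ^ a * G (y ^ N))
      (a * z ^ (a - 1) * G (z ^ N) + z ^ a * (deriv G (z ^ N) * (N * z ^ (N - 1)))) z :=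
    (hasDerivAt_zpow a z (Or.inl hz)).mul (hG.hasDerivAt.comp z (hasDerivAt_pow N z))
  rw [hder.deriv, zpow_sub_one₀ hz, ← mul_pow_sub_one hN z]
  field_simp

lemma Lop_zpow_mul_comp_pow (hz : z ≠ 0) (hz2 : z ^ (2 * N) ≠ 1) {a r : ℤ}
    (hlt : -(N * r) < 2 * a) (hle : 2 * a ≤ N * (1 - r)) {G : ℂ → ℂ}
    (hG : DifferentiableAt ℂ G (z ^ N)) :
    Lop α β N (fun y => y ^ a * G (y ^ N)) z =
      z ^ a * (a * G (z ^ N) + N * reducedOp α β r G (z ^ N)) := by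
  have hN : N ≠ 0 := by rintro rfl; simp at hz2
  have hreflect : ∀ k ∈ range N, Acoef α β N k z *
      ((qN N ^ k / z) ^ a * G ((qN N ^ k / z) ^ N) - z ^ a * G (z ^ N)) =
      Acoef α β N k z * (qN N ^ k) ^ a * ((z ^ a)⁻¹ * G (z ^ N)⁻¹) -
        Acoef α β N k z * (z ^ a * G (z ^ N)) := by
    intro k _
    rw [div_zpow, div_pow, pow_right_comm, (isPrimitiveRoot_qN hN).pow_eq_one, one_pow, one_div]
    ring
  rw [Lop, mul_deriv_zpow_mul_comp_pow a hN hz hG, sum_congr rfl hreflect, sum_sub_distrib,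
    ← sum_mul, ← sum_mul, sum_Acoef_mul_zpow_eq_jacobiWeight α β hz hz2 hlt hle,
    sum_Acoef α β hz hz2, reducedOp, mul_comm 2 N, pow_mul z N 2]
  have hza : z ^ a ≠ 0 := zpow_ne_zero a hz
  field_simp
  ring

lemma Lop_congr {f g : ℂ → ℂ} (hfg : ∀ y ≠ 0, f y = g y) (hz : z ≠ 0) :
    Lop α β N f z = Lop α β N g z := by
  have hderiv : deriv f z = deriv g z :=
    Filter.EventuallyEq.deriv_eq (by filter_upwards [isOpen_ne.mem_nhds hz] using hfg)
  have hq (k : ℕ) : qN N ^ k / z ≠ 0 := div_ne_zero (pow_ne_zero k (Complex.exp_ne_zero _)) hz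
  simp only [Lop, hderiv, hfg z hz, hfg _ (hq _)]

lemma Lop_eq_mul_of_reducedOp_eq_mul (hz : z ≠ 0) (hz2 : z ^ (2 * N) ≠ 1) {a r : ℤ}
    (hlt : -(N * r) < 2 * a) (hle : 2 * a ≤ N * (1 - r)) {f G : ℂ → ℂ} {μ : ℂ}
    (hf : ∀ y ≠ 0, f y = y ^ a * G (y ^ N)) (hG : DifferentiableAt ℂ G (z ^ N))
    (hμ : reducedOp α β r G (z ^ N) = μ * G (z ^ N)) :
    Lop α β N f z = (a + N * μ) * f z := by
  rw [Lop_congr α β hf hz, Lop_zpow_mul_comp_pow α β hz hz2 hlt hle hG, hμ, hf z hz]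
  ring

end ReducedOperator

section Jacobi

variable {α β : ℝ} (k : ℕ) {w : ℂ}

lemma jacobiA_mul_eq_jacobiWeight_sub (hαβ : (k : ℝ) + α + β + 2 ≠ 0) (w : ℂ) :
    jacobiA α β k * (k + 1 + ((α : ℂ) + β + 1)) * (w ^ 2 - 1) =
      jacobiWeight α β (k + 1) w - w * jacobiWeight α β k w := by
  have hden : (k : ℂ) + α + β + 2 ≠ 0 := by exact_mod_cast hαβ
  rcases Nat.even_or_odd k with hk | hk
  all_goals
    simp only [jacobiA, jacobiWeight, Int.even_add_one, Int.even_coe_nat, hk, pow_succ,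
      hk.neg_one_pow, Nat.not_even_iff_odd.mpr, not_true_eq_false, not_false_eq_true, if_true,
      if_false]
    push_cast
    field_simp
    ring

lemma jacobi_structure_relations (hαβ : ∀ m : ℕ, (m : ℝ) + α + β + 2 ≠ 0) (hw : w ≠ 0) :
    (w ^ 2 - 1) * (w * deriv (Phi (jacobiA α β) k) w) =
        k * (w ^ 2 - 1) * Phi (jacobiA α β) k w +
          jacobiWeight α β k w * PhiStar (jacobiA α β) k w -
          jacobiWeight α β 0 w * Phi (jacobiA α β) k w ∧
      (w ^ 2 - 1) * (w * deriv (PhiStar (jacobiA α β) k) w) =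
        w * jacobiWeight α β (k + 1) w * Phi (jacobiA α β) k w -
          w * jacobiWeight α β 1 w * PhiStar (jacobiA α β) k w := by
  induction k with
  | zero =>
    have hPhi : Phi (jacobiA α β) 0 = fun _ => 1 := rfl
    have hPhiStar : PhiStar (jacobiA α β) 0 = fun _ => 1 := by
      funext y
      simp [PhiStar, Phi]
    simp [hPhi, hPhiStar]
  | succ k ih =>
    obtain ⟨hPhi, hPhiStar⟩ := ih
    have hparam := jacobiA_mul_eq_jacobiWeight_sub k (hαβ k) w
    have hone := mul_jacobiWeight_one_sub α β w
    rw [deriv_Phi_succ _ _ hw, deriv_PhiStar_succ _ _ hw, Phi_succ, PhiStar_succ _ _ hw]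
    push_cast
    rw [add_assoc (k : ℤ) 1 1, one_add_one_eq_two, jacobiWeight_add_two]
    constructor
    · linear_combination w * hPhi - jacobiA α β k * hPhiStar +
        PhiStar (jacobiA α β) k w * (hparam + jacobiA α β k * hone)
    · linear_combination hPhiStar - jacobiA α β k * w * hPhi -
        w * Phi (jacobiA α β) k w * (hparam + jacobiA α β k * hone)

lemma reducedOp_Phi_jacobi (hαβ : ∀ m : ℕ, (m : ℝ) + α + β + 2 ≠ 0) (hw : w ≠ 0)
    (hw2 : w ^ 2 ≠ 1) :
    reducedOp α β k (Phi (jacobiA α β) k) w =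
      (k + ((α : ℂ) + β + 1)) * Phi (jacobiA α β) k w := by
  have hd : 1 - w ^ 2 ≠ 0 := sub_ne_zero.mpr hw2.symm
  have hrev : w ^ k * Phi (jacobiA α β) k w⁻¹ = PhiStar (jacobiA α β) k w := rfl
  rw [reducedOp, zpow_natCast, mul_right_comm, hrev, ← mul_right_inj' hd, mul_add,
    mul_div_cancel₀ _ hd]
  linear_combination -(jacobi_structure_relations k hαβ hw).1 -
    Phi (jacobiA α β) k w * mul_jacobiWeight_one_sub α β w

lemma reducedOp_PhiStar_jacobi (hαβ : ∀ m : ℕ, (m : ℝ) + α + β + 2 ≠ 0) (hw : w ≠ 0)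
    (hw2 : w ^ 2 ≠ 1) :
    reducedOp α β (k + 1) (PhiStar (jacobiA α β) k) w = 0 := by
  have hd : 1 - w ^ 2 ≠ 0 := sub_ne_zero.mpr hw2.symm
  rw [reducedOp, zpow_add_one₀ hw, zpow_natCast, ← mul_right_inj' hd, mul_add,
    mul_div_cancel₀ _ hd]
  linear_combination -(jacobi_structure_relations k hαβ hw).2 +
    w * jacobiWeight α β (k + 1) w * pow_mul_PhiStar_inv (jacobiA α β) k hw

end Jacobi

theorem stmt_11_general (α β : ℝ) (hαβ : ∀ m : ℕ, (m : ℝ) + α + β + 2 ≠ 0) (N n : ℕ)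
    (z : ℂ) (hz : z ≠ 0) (hz2 : z ^ (2 * N) ≠ 1) :
    Lop α β N (psi (sievedA α β N) n) z
      = (if Even n then -(n : ℂ) / 2 else ((n : ℂ) + 1) / 2 + ((α : ℂ) + β + 1) * N)
        * psi (sievedA α β N) n z := by
  have hN : 0 < N := Nat.pos_of_ne_zero (by rintro rfl; simp at hz2)
  have hw : z ^ N ≠ 0 := pow_ne_zero N hz
  have hw2 : (z ^ N) ^ 2 ≠ 1 := by rwa [← pow_mul, mul_comm]
  obtain ⟨k, j, hj, hn⟩ : ∃ k j, j < N ∧ n = N * k + j :=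
    ⟨n / N, n % N, n.mod_lt hN, (Nat.div_add_mod n N).symm⟩
  rw [sievedA_eq_sieve]
  obtain ⟨m, rfl | rfl⟩ := n.even_or_odd'
  · rw [if_pos (even_two_mul m), Lop_eq_mul_of_reducedOp_eq_mul α β (f := psi _ _) hz hz2
      (by lia) (by lia) (fun _ => psi_sieve_two_mul _ k hn hj) (differentiableAt_PhiStar _ k hw)
      ((reducedOp_PhiStar_jacobi k hαβ hw hw2).trans (zero_mul _).symm)]
    push_cast
    ring
  · rw [if_neg (by simp), Lop_eq_mul_of_reducedOp_eq_mul α β (f := psi _ _) hz hz2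
      (by lia) (by lia) (fun _ => psi_sieve_two_mul_add_one _ k hn hj)
      (differentiableAt_Phi _ k hw) (reducedOp_Phi_jacobi k hαβ hw hw2)]
    have hnC : (2 * m + 1 : ℂ) = N * k + j := by exact_mod_cast hn
    push_cast
    linear_combination (-psi (sieve N (jacobiA α β)) (2 * m + 1) z) * hnC

/-- the CMV Laurent polynomials ψ_n(z;N) associated to the sieved Jacobi
OPUC satisfy the eigenvalue equation L(N) ψ_n(·;N) = λ_n(N) ψ_n(·;N). -/
theorem stmt_11 (α β : ℝ) (hα : -1 < α) (hβ : -1 < β) (N : ℕ) (hN : 1 ≤ N) (n : ℕ)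
    (z : ℂ) (hz : z ≠ 0) (hz2 : z ^ (2 * N) ≠ 1) :
    z * deriv (psi (sievedA α β N) n) z
      + ∑ k ∈ Finset.range N, Acoef α β N k z *
          (psi (sievedA α β N) n (qN N ^ k / z) - psi (sievedA α β N) n z)
      = (if Even n then -(n : ℂ) / 2 else ((n : ℂ) + 1) / 2 + ((α : ℂ) + β + 1) * N)
        * psi (sievedA α β N) n z :=
  stmt_11_general α β (fun m => by have := m.cast_nonneg (α := ℝ); linarith) N n z hz hz2
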